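/- Theorem 2, full piecewise form: let p, p* ∈ [1,∞] be conjugate exponents (1/p + 1/p* = 1), let H ∈ ℝ^{n_θ×s}, θ_c ∈ ℝ^{n_θ}, and for ℓ = 1,…,L let f_ℓ ∈ ℝ^{n_θ}, g_ℓ ∈ ℝ. Set τ_ℓ := g_ℓ − f_ℓᵀθ_c, ρ_ℓ := ‖Hᵀ f_ℓ‖_{p*}, and X := {θ ∈ ℝ^{n_θ} : f_ℓᵀθ ≤ g_ℓ for all ℓ}. Define γ_ℓ ∈ [0,∞] by: γ_ℓ = 0 if τ_ℓ < 0; γ_ℓ = ∞ if τ_ℓ ≥ 0 and ρ_ℓ = 0; and γ_ℓ = τ_ℓ/ρ_ℓ if τ_ℓ ≥ 0 and ρ_ℓ > 0. Define γ(X) ∈ [0,∞] by γ(X) := 0 if θ_c ∉ X and γ(X) := sup{γ ≥ 0 : θ_c ⊕ γ H B_p^s ⊆ X} otherwise. Then γ(X) = min_{ℓ=1,…,L} γ_ℓ. -/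

import Mathlib

/-!
The inclusion `θc ⊕ γ H B_p ⊆ X` can be tested one half-space at a time. The support function of
`B_p` at `Hᵀ f ℓ` is the dual norm `‖Hᵀ f ℓ‖_q`: Hölder's inequality (`dotProduct_le_lpNorm`) gives
the upper bound, and equality is attained on the unit ball (`exists_dotProduct_eq_lpNorm`). Hence
the inclusion says `γ * ρ ℓ ≤ τ ℓ` for every `ℓ`. For `θc ∈ X` all `τ ℓ` are nonnegative, and this
is `γ ≤ γ_ℓ` for every `ℓ`, so the supremum of the admissible `γ` is the minimum of the `γ_ℓ`.
-/

open Matrix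
open scoped ENNReal NNReal Classical

/-- The `ℓ_p` norm on `ℝ^s`, for `p ∈ [0,∞]`. -/
noncomputable def lpNorm (p : ℝ≥0∞) {s : ℕ} (z : Fin s → ℝ) : ℝ :=
  ‖(WithLp.equiv p (Fin s → ℝ)).symm z‖

/-- The per-constraint scaling factor `γ_ℓ ∈ [0,∞]`:
`0` if `τ < 0`; `∞` if `τ ≥ 0` and `ρ = 0`; `τ/ρ` if `τ ≥ 0` and `ρ > 0`. -/
noncomputable def gammaEll (τ ρ : ℝ) : ℝ≥0∞ :=
  if τ < 0 then 0 else if ρ = 0 then ∞ else ENNReal.ofReal (τ / ρ)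

/-- The scaling factor `γ(X) ∈ [0,∞]` of the norm-based SAS `θ_c ⊕ γ H B_p^s`
relative to `X`: `0` if `θ_c ∉ X`, and `sup {γ ≥ 0 : θ_c ⊕ γ H B_p^s ⊆ X}` otherwise. -/
noncomputable def gammaSAS (p : ℝ≥0∞) {nθ s : ℕ} (H : Matrix (Fin nθ) (Fin s) ℝ)
    (θc : Fin nθ → ℝ) (X : Set (Fin nθ → ℝ)) : ℝ≥0∞ :=
  if θc ∈ X then
    ⨆ γ ∈ {γ : ℝ≥0 | (fun z => θc + (γ : ℝ) • H.mulVec z) '' {z | lpNorm p z ≤ 1} ⊆ X},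
      (γ : ℝ≥0∞)
  else 0

lemma lpNorm_top {s : ℕ} (z : Fin s → ℝ) : lpNorm ∞ z = ⨆ i, |z i| := by
  simp [lpNorm, PiLp.norm_eq_ciSup]

lemma lpNorm_one {s : ℕ} (z : Fin s → ℝ) : lpNorm 1 z = ∑ i, |z i| := by
  simp [lpNorm, PiLp.norm_eq_sum (p := 1) (by simp)]

lemma lpNorm_eq_sum {p : ℝ≥0∞} (hp : 0 < p.toReal) {s : ℕ} (z : Fin s → ℝ) :
    lpNorm p z = (∑ i, |z i| ^ p.toReal) ^ (1 / p.toReal) := by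
  simp [lpNorm, PiLp.norm_eq_sum hp]

lemma abs_le_lpNorm_top {s : ℕ} (z : Fin s → ℝ) (i : Fin s) : |z i| ≤ lpNorm ∞ z := by
  rw [lpNorm_top]
  exact le_ciSup (f := fun i => |z i|) (Set.finite_range _).bddAbove i

lemma lpNorm_nonneg {p : ℝ≥0∞} (hp : 1 ≤ p) {s : ℕ} (z : Fin s → ℝ) : 0 ≤ lpNorm p z := by
  have : Fact (1 ≤ p) := ⟨hp⟩
  exact norm_nonneg _

/-- Conjugate exponents in `[1,∞]` are `(∞,1)`, `(1,∞)` or a pair of conjugate reals. -/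
lemma conj_cases {p q : ℝ≥0∞} (hp : 1 ≤ p) (hq : 1 ≤ q) (hpq : 1 / p + 1 / q = 1) :
    (p = ∞ ∧ q = 1) ∨ (p = 1 ∧ q = ∞) ∨ p.toReal.HolderConjugate q.toReal := by
  by_cases h1 : p = ∞
  · subst h1
    left
    simpa using hpq
  by_cases h2 : q = ∞
  · subst h2
    right; left
    simpa using hpq
  right; right
  have hp0 : 0 < p.toReal := ENNReal.toReal_pos (by positivity) h1
  have hq0 : 0 < q.toReal := ENNReal.toReal_pos (by positivity) h2
  have h := congrArg ENNReal.toReal hpq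
  rw [ENNReal.toReal_add (by simp; positivity) (by simp; positivity)] at h
  simp only [one_div, ENNReal.toReal_inv, ENNReal.toReal_one] at h
  exact ⟨by simpa using h, hp0, hq0⟩

/-- Hölder's inequality on the unit ball of `ℓ_p`. -/
lemma dotProduct_le_lpNorm {p q : ℝ≥0∞} (hp : 1 ≤ p) (hq : 1 ≤ q) (hpq : 1 / p + 1 / q = 1)
    {s : ℕ} (w z : Fin s → ℝ) (hz : lpNorm p z ≤ 1) : w ⬝ᵥ z ≤ lpNorm q w := by
  have habs : ∀ i, w i * z i ≤ |w i| * |z i| := fun i => by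
    rw [← abs_mul]; exact le_abs_self _
  rcases conj_cases hp hq hpq with ⟨rfl, rfl⟩ | ⟨rfl, rfl⟩ | h
  · rw [lpNorm_one]
    refine Finset.sum_le_sum fun i _ => (habs i).trans ?_
    exact mul_le_of_le_one_right (abs_nonneg _) ((abs_le_lpNorm_top z i).trans hz)
  · rw [lpNorm_one] at hz
    calc w ⬝ᵥ z ≤ ∑ i, lpNorm ∞ w * |z i| := by
          refine Finset.sum_le_sum fun i _ => (habs i).trans ?_
          gcongr
          exact abs_le_lpNorm_top w i
      _ = lpNorm ∞ w * ∑ i, |z i| := by rw [Finset.mul_sum]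
      _ ≤ lpNorm ∞ w := mul_le_of_le_one_right (lpNorm_nonneg hq w) hz
  · have h0 := Real.inner_le_Lp_mul_Lq Finset.univ w z h.symm
    rw [← lpNorm_eq_sum h.symm.pos, ← lpNorm_eq_sum h.pos] at h0
    exact h0.trans (mul_le_of_le_one_right (lpNorm_nonneg hq w) hz)

/-- Hölder's inequality is sharp: the dual norm of `w` is attained on the unit ball of `ℓ_p`. -/
lemma exists_dotProduct_eq_lpNorm {p q : ℝ≥0∞} (hp : 1 ≤ p) (hq : 1 ≤ q)
    (hpq : 1 / p + 1 / q = 1) {s : ℕ} (w : Fin s → ℝ) :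
    ∃ z, lpNorm p z ≤ 1 ∧ w ⬝ᵥ z = lpNorm q w := by
  have hsgn : ∀ x : ℝ, |(SignType.sign x : ℝ)| ≤ 1 := fun x => by
    rcases lt_trichotomy x 0 with h | h | h <;> simp [h]
  have hmul : ∀ x : ℝ, x * (SignType.sign x : ℝ) = |x| := fun x => self_mul_sign x
  rcases conj_cases hp hq hpq with ⟨rfl, rfl⟩ | ⟨rfl, rfl⟩ | h
  · refine ⟨fun i => (SignType.sign (w i) : ℝ), ?_, ?_⟩
    · rw [lpNorm_top]
      exact Real.iSup_le (fun i => hsgn _) zero_le_one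
    · rw [lpNorm_one]
      exact Finset.sum_congr rfl fun i _ => hmul _
  · rcases isEmpty_or_nonempty (Fin s) with hs | hs
    · exact ⟨0, by simp [lpNorm_one], by simp [lpNorm_top]⟩
    -- the signed unit vector at a coordinate of largest modulus
    obtain ⟨i, hi⟩ := exists_eq_ciSup_of_finite (f := fun i => |w i|)
    refine ⟨Pi.single i (SignType.sign (w i) : ℝ), ?_, ?_⟩
    · rw [lpNorm_one, Finset.sum_eq_single i]
      · simpa using hsgn (w i)
      · intro j _ hj
        simp [hj]
      · simp
    · rw [lpNorm_top, ← hi, dotProduct_single, hmul]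
  · obtain ⟨u, hu, hu'⟩ :=
      (NNReal.isGreatest_Lp Finset.univ (fun i => Real.nnabs (w i)) h.symm).1
    refine ⟨fun i => (SignType.sign (w i) : ℝ) * u i, ?_, ?_⟩
    · rw [lpNorm_eq_sum h.pos]
      refine Real.rpow_le_one (by positivity) ?_ (by have := h.pos; positivity)
      have hu1 : ∑ i, (u i : ℝ) ^ p.toReal ≤ 1 := by exact_mod_cast hu
      refine le_trans (Finset.sum_le_sum fun i _ => ?_) hu1
      refine Real.rpow_le_rpow (abs_nonneg _) ?_ h.pos.le
      rw [abs_mul, abs_of_nonneg (u i).coe_nonneg]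
      exact mul_le_of_le_one_left (u i).coe_nonneg (hsgn _)
    · rw [lpNorm_eq_sum h.symm.pos]
      have hu2 := congrArg ((↑) : ℝ≥0 → ℝ) hu'
      push_cast at hu2
      rw [← hu2]
      exact Finset.sum_congr rfl fun i _ => by rw [← mul_assoc, hmul]

/-- The inclusion of `θc ⊕ γ H B_p` in a half-space, by maximizing `f` over the ball: the maximum
of `z ↦ f ⬝ᵥ H z` over `B_p` is the dual norm of `Hᵀ f`. -/
lemma image_le_iff {p q : ℝ≥0∞} (hp : 1 ≤ p) (hq : 1 ≤ q) (hpq : 1 / p + 1 / q = 1)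
    {nθ s : ℕ} (H : Matrix (Fin nθ) (Fin s) ℝ) (θc f : Fin nθ → ℝ) (g : ℝ) (γ : ℝ≥0) :
    (∀ z, lpNorm p z ≤ 1 → f ⬝ᵥ (θc + (γ : ℝ) • H.mulVec z) ≤ g) ↔
      γ * lpNorm q (H.transpose.mulVec f) ≤ g - f ⬝ᵥ θc := by
  have key : ∀ z, f ⬝ᵥ (θc + (γ : ℝ) • H.mulVec z) =
      f ⬝ᵥ θc + γ * (H.transpose.mulVec f ⬝ᵥ z) := fun z => by
    rw [dotProduct_add, dotProduct_smul, dotProduct_mulVec, mulVec_transpose, smul_eq_mul]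
  simp only [key]
  constructor
  · intro h
    obtain ⟨z, hz, hz'⟩ := exists_dotProduct_eq_lpNorm hp hq hpq (H.transpose.mulVec f)
    have := h z hz
    rw [hz'] at this
    linarith
  · intro h z hz
    have := mul_le_mul_of_nonneg_left
      (dotProduct_le_lpNorm hp hq hpq (H.transpose.mulVec f) z hz) γ.coe_nonneg
    linarith

lemma le_gammaEll_iff {τ ρ : ℝ} (hτ : 0 ≤ τ) (hρ : 0 ≤ ρ) (γ : ℝ≥0) :
    (γ : ℝ≥0∞) ≤ gammaEll τ ρ ↔ γ * ρ ≤ τ := by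
  unfold gammaEll
  rw [if_neg hτ.not_gt]
  split_ifs with h
  · simp [h, hτ]
  · have hρ' : 0 < ρ := lt_of_le_of_ne hρ (Ne.symm h)
    rw [← ENNReal.ofReal_coe_nnreal, ENNReal.ofReal_le_ofReal_iff (by positivity),
      le_div_iff₀ hρ']

/-- **Theorem 2, full piecewise form.** -/
theorem scaling_factor_norm_based_full
    (p q : ℝ≥0∞) (hp : 1 ≤ p) (hq : 1 ≤ q) (hpq : 1 / p + 1 / q = 1)
    {nθ s L : ℕ} (hL : 0 < L)
    (H : Matrix (Fin nθ) (Fin s) ℝ) (θc : Fin nθ → ℝ)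
    (f : Fin L → Fin nθ → ℝ) (g : Fin L → ℝ) :
    gammaSAS p H θc {θ : Fin nθ → ℝ | ∀ ℓ, f ℓ ⬝ᵥ θ ≤ g ℓ} =
      ⨅ ℓ : Fin L, gammaEll (g ℓ - f ℓ ⬝ᵥ θc) (lpNorm q (H.transpose.mulVec (f ℓ))) := by
  have hρ : ∀ ℓ, 0 ≤ lpNorm q (H.transpose.mulVec (f ℓ)) := fun ℓ => lpNorm_nonneg hq _
  unfold gammaSAS
  split_ifs with hc
  · have hτ : ∀ ℓ, 0 ≤ g ℓ - f ℓ ⬝ᵥ θc := fun ℓ => sub_nonneg.2 (hc ℓ)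
    have hmem : ∀ γ : ℝ≥0, (fun z => θc + (γ : ℝ) • H.mulVec z) '' {z | lpNorm p z ≤ 1} ⊆
        {θ : Fin nθ → ℝ | ∀ ℓ, f ℓ ⬝ᵥ θ ≤ g ℓ} ↔ (γ : ℝ≥0∞) ≤
          ⨅ ℓ, gammaEll (g ℓ - f ℓ ⬝ᵥ θc) (lpNorm q (H.transpose.mulVec (f ℓ))) := fun γ => by
      rw [le_iInf_iff, Set.image_subset_iff]
      simp only [le_gammaEll_iff (hτ _) (hρ _), ← image_le_iff hp hq hpq]
      exact ⟨fun h ℓ z hz => h hz ℓ, fun h z hz ℓ => h ℓ z hz⟩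
    simp only [Set.mem_ofPred_eq, hmem]
    refine le_antisymm (iSup₂_le fun γ h => h) (ENNReal.le_of_forall_nnreal_lt fun r hr => ?_)
    exact le_iSup₂_of_le r hr.le le_rfl
  · simp only [Set.mem_ofPred_eq, not_forall, not_le] at hc
    obtain ⟨ℓ, hℓ⟩ := hc
    refine le_antisymm zero_le (iInf_le_of_le ℓ ?_)
    rw [gammaEll, if_pos (sub_neg.2 hℓ)]
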